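/- Let q be a prime power, K the field with q² elements with Frobenius automorphism σ(a) = a^q, B ∈ M_n(K) an invertible hermitian matrix, and 𝒞(B) = {g ∈ M_n(K) : g invertible, g·B·g* = B} the corresponding unitary group. Let x, y ∈ 𝒞(B) be semisimple with det x = det y = 1. If x and y are conjugate by an element of 𝒞(B), then they are conjugate by an element h ∈ 𝒞(B) with det h = 1; that is, the conjugacy class of a semisimple element of the special unitary group {g ∈ 𝒞(B) : det g = 1} coincides with its conjugacy class in 𝒞(B). -/

import Mathlib

open Matrix

/-- For a matrix over the field `K` with `q²` elements, `X* = (σX)ᵀ` where `σ(a) = a^q`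
is the Frobenius automorphism. -/
def hermStar {K : Type*} [Field K] {n : ℕ} (q : ℕ) (X : Matrix (Fin n) (Fin n) K) :
    Matrix (Fin n) (Fin n) K :=
  (X.map fun a => a ^ q)ᵀ

/-!
If `g` conjugates `x` to `y` and `z` is a unitary element of the commutant of `x`, then `z * g`
also conjugates `x` to `y`, so it suffices to find such a `z` with `det z = (det g)⁻¹`. As `g` is
unitary, `(det g)⁻¹ = a / σ a` for some `a` by Hilbert 90. If `b` commutes with `x`, is normal for
the adjoint `†` of the form `B`, and has determinant `a`, then `z = b (b†)⁻¹` is as required.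

The commutant is the endomorphism ring of a semisimple `K[X]`-module. Take an idempotent `e` in it
with simple range. If neither `e† e` nor `e e†` is nonzero, `e` is normal; otherwise simplicity lets
one replace `e` by a self-adjoint projection with the same range (if `e† e ≠ 0`) or the same kernel
(if `e e† ≠ 0`). In all cases there is a normal idempotent `p` with simple range `U`, and
`b = 1 + (r - 1) p` with `r ∈ K[X]` is normal because `r` is central. Its determinant is that of `r`
on `U`, which takes every value in `K` because `U` is isomorphic to a finite extension field of `K`,
whose norm is surjective.
-/

open Module Polynomial

theorem exists_isStarProjection_mul_eq {A : Type*} [Ring A] [StarRing A] {e r : A}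
    (he : IsIdempotentElem e) (hr : r * (star e * e) = e) :
    ∃ p : A, IsStarProjection p ∧ e * p = p ∧ p * e = e := by
  obtain ⟨p, hp⟩ : ∃ p, p = e * r * star e := ⟨_, rfl⟩
  have hep : e * p = p := by rw [hp, ← mul_assoc, ← mul_assoc, he.eq]
  have hpe : p * e = e := by rw [hp, mul_assoc (e * r), mul_assoc, hr, he.eq]
  have hpp : p * star p = p := by
    nth_rw 1 [hp]
    rw [mul_assoc, ← star_mul, hpe, hp]
  have hsa : IsSelfAdjoint p := hpp ▸ IsSelfAdjoint.mul_star_self p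
  exact ⟨p, ⟨by rwa [hsa.star_eq] at hpp, hsa⟩, hep, hpe⟩

theorem isStarNormal_mul_of_mem_center {A : Type*} [Semigroup A] [StarMul A] {a b : A}
    (ha : a ∈ Set.center A) (hb : IsStarNormal b) : IsStarNormal (a * b) := by
  have ha_comm : ∀ c, Commute a c := fun c => (Semigroup.mem_center_iff.1 ha c).symm
  have hsa_comm : ∀ c, Commute (star a) c := fun c =>
    (Semigroup.mem_center_iff.1 (Set.star_mem_center ha) c).symm
  refine ⟨?_⟩
  rw [star_mul]
  exact .mul_right (ha_comm _).symm (.mul_left hb.star_comm_self (hsa_comm b))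

section SemisimpleModule

variable {R M N P : Type*} [Ring R] [AddCommGroup M] [Module R M] [AddCommGroup N] [Module R N]
  [AddCommGroup P] [Module R P]

theorem exists_comp_eq_of_ker_le_ker [IsSemisimpleModule R N] {s : M →ₗ[R] N} {a : M →ₗ[R] P}
    (h : LinearMap.ker s ≤ LinearMap.ker a) : ∃ r : N →ₗ[R] P, r ∘ₗ s = a := by
  obtain ⟨r, hr⟩ := IsSemisimpleModule.extension_property
    ((LinearMap.ker s).liftQ s le_rfl)
    (LinearMap.ker_eq_bot.1 (Submodule.ker_liftQ_eq_bot _ _ _ le_rfl)) ((LinearMap.ker s).liftQ a h)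
  refine ⟨r, ?_⟩
  rw [← (LinearMap.ker s).liftQ_mkQ s le_rfl, ← LinearMap.comp_assoc, hr, Submodule.liftQ_mkQ]

theorem exists_comp_eq_of_range_le_range [IsSemisimpleModule R M] {s : M →ₗ[R] N} {a : P →ₗ[R] N}
    (h : LinearMap.range a ≤ LinearMap.range s) : ∃ r : P →ₗ[R] M, s ∘ₗ r = a := by
  obtain ⟨r, hr⟩ := IsSemisimpleModule.lifting_property s.rangeRestrict s.surjective_rangeRestrict
    (a.codRestrict _ fun v => h ⟨v, rfl⟩)
  exact ⟨r, LinearMap.ext fun v => congrArg Subtype.val (LinearMap.congr_fun hr v)⟩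

theorem exists_isIdempotentElem_isSimpleModule_range (R M : Type*) [Ring R] [AddCommGroup M]
    [Module R M] [IsSemisimpleModule R M] [Nontrivial M] :
    ∃ e : End R M, IsIdempotentElem e ∧ IsSimpleModule R (LinearMap.range e) := by
  obtain ⟨U, hU⟩ := IsSemisimpleModule.exists_simple_submodule R M
  obtain ⟨W, hUW⟩ := exists_isCompl U
  exact ⟨U.projection W hUW, Submodule.isIdempotentElem_projection hUW,
    (Submodule.range_projection hUW).symm ▸ hU⟩

variable [IsSemisimpleModule R M] {e : End R M} [IsSimpleModule R (LinearMap.range e)]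

theorem exists_left_mul_eq_self_of_mul_ne_zero {a : End R M} (h : a * e ≠ 0) :
    ∃ r : End R M, r * (a * e) = e := by
  have hinj : Function.Injective (a.domRestrict (LinearMap.range e)) :=
    LinearMap.injective_of_ne_zero fun h0 => h <| LinearMap.ext fun v =>
      LinearMap.congr_fun h0 (e.rangeRestrict v)
  refine exists_comp_eq_of_ker_le_ker fun v (hv : a (e v) = 0) => ?_
  exact congrArg Subtype.val (@hinj (e.rangeRestrict v) 0 (hv.trans (map_zero _).symm))

theorem exists_right_mul_eq_self_of_mul_ne_zero {a : End R M} (h : e * a ≠ 0) :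
    ∃ r : End R M, e * a * r = e := by
  have hsurj : Function.Surjective (e.rangeRestrict ∘ₗ a) :=
    LinearMap.surjective_of_ne_zero fun h0 => h <| LinearMap.ext fun v =>
      congrArg Subtype.val (LinearMap.congr_fun h0 v)
  refine exists_comp_eq_of_range_le_range ?_
  rintro _ ⟨v, rfl⟩
  obtain ⟨w, hw⟩ := hsurj (e.rangeRestrict v)
  exact ⟨w, congrArg Subtype.val hw⟩

theorem exists_isStarNormal_isIdempotentElem [StarRing (End R M)] (he : IsIdempotentElem e) :
    ∃ p : End R M, IsIdempotentElem p ∧ IsStarNormal p ∧ IsSimpleModule R (LinearMap.range p) := by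
  by_cases hse : star e * e = 0
  · by_cases hes : e * star e = 0
    · exact ⟨e, he, ⟨hse.trans hes.symm⟩, inferInstance⟩
    obtain ⟨r, hr⟩ := exists_right_mul_eq_self_of_mul_ne_zero hes
    obtain ⟨p, hp, hep, hpe⟩ := exists_isStarProjection_mul_eq (r := star r) he.star
      (by simpa using congrArg star hr)
    have hpe' : p * e = p := by simpa [hp.isSelfAdjoint.star_eq] using congrArg star hep
    have hep' : e * p = e := by simpa [hp.isSelfAdjoint.star_eq] using congrArg star hpe
    have hker : LinearMap.ker e = LinearMap.ker p := le_antisymm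
      (hpe' ▸ LinearMap.ker_le_ker_comp e p) (hep' ▸ LinearMap.ker_le_ker_comp p e)
    exact ⟨p, hp.isIdempotentElem, hp.isStarNormal,
      .congr (p.quotKerEquivRange.symm ≪≫ₗ Submodule.quotEquivOfEq _ _ hker.symm ≪≫ₗ
        e.quotKerEquivRange)⟩
  · obtain ⟨r, hr⟩ := exists_left_mul_eq_self_of_mul_ne_zero hse
    obtain ⟨p, hp, hep, hpe⟩ := exists_isStarProjection_mul_eq he hr
    have hrange : LinearMap.range p = LinearMap.range e := le_antisymm
      (hep ▸ LinearMap.range_comp_le_range p e) (hpe ▸ LinearMap.range_comp_le_range e p)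
    exact ⟨p, hp.isIdempotentElem, hp.isStarNormal, hrange ▸ inferInstance⟩

end SemisimpleModule

theorem det_one_add_comp_comm {R M N : Type*} [CommRing R] [AddCommGroup M] [Module R M]
    [Module.Free R M] [Module.Finite R M] [AddCommGroup N] [Module R N] [Module.Free R N]
    [Module.Finite R N] (f : M →ₗ[R] N) (g : N →ₗ[R] M) :
    LinearMap.det (1 + f ∘ₗ g) = LinearMap.det (1 + g ∘ₗ f) := by
  classical
  let bM := Free.chooseBasis R M
  let bN := Free.chooseBasis R N
  rw [← LinearMap.det_toMatrix bN, ← LinearMap.det_toMatrix bM, map_add, map_add,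
    LinearMap.toMatrix_one, LinearMap.toMatrix_one, LinearMap.toMatrix_comp bN bM bN,
    LinearMap.toMatrix_comp bM bN bM, Matrix.det_one_add_mul_comm]

section Determinant

variable {K R M : Type*} [Field K] [CommRing R] [Algebra K R] [AddCommGroup M] [Module K M]
  [Module R M] [IsScalarTower K R M] [Module.Finite K M]

theorem finite_submodule_of_isScalarTower (U : Submodule R M) : Module.Finite K U :=
  .of_injective (U.subtype.restrictScalars K) Subtype.val_injective

theorem det_one_add_sub_one_smul_of_isIdempotentElem {p : End R M} (hp : IsIdempotentElem p)
    (r : R) :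
    LinearMap.det ((1 + (r - 1) • p).restrictScalars K) =
      LinearMap.det (Algebra.lsmul K K (LinearMap.range p) r) := by
  have := finite_submodule_of_isScalarTower (K := K) (LinearMap.range p)
  have hpr : p.rangeRestrict ∘ₗ (LinearMap.range p).subtype = .id := by
    ext ⟨_, v, rfl⟩
    exact LinearMap.congr_fun hp.eq v
  have hfactor : (1 + (r - 1) • p).restrictScalars K = 1 +
      (LinearMap.range p).subtype.restrictScalars K ∘ₗ
        ((r - 1) • p.rangeRestrict).restrictScalars K := rfl
  have hswap : 1 + ((r - 1) • p.rangeRestrict).restrictScalars K ∘ₗ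
      (LinearMap.range p).subtype.restrictScalars K =
        Algebra.lsmul K K (LinearMap.range p) r := by
    ext v
    have hv : p v = v := congrArg Subtype.val (LinearMap.congr_fun hpr v)
    simp [hv, sub_smul]
  rw [hfactor, det_one_add_comp_comm, hswap]

variable [Finite K]

theorem exists_det_lsmul_eq [hM : IsSimpleModule R M] (a : K) :
    ∃ r : R, LinearMap.det (Algebra.lsmul K K M r) = a := by
  obtain ⟨I, _, ⟨φ⟩⟩ := isSimpleModule_iff_quot_maximal.1 hM
  let φK : M ≃ₗ[K] R ⧸ I := φ.restrictScalars K
  let : Field (R ⧸ I) := Ideal.Quotient.field I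
  have : Module.Finite K (R ⧸ I) := Module.Finite.equiv φK
  have : Finite (R ⧸ I) := Module.finite_of_finite K
  obtain ⟨b, hb⟩ := FiniteField.norm_surjective K (R ⧸ I) a
  obtain ⟨r, rfl⟩ := Ideal.Quotient.mk_surjective b
  have hφ : Algebra.lmul K (R ⧸ I) (Ideal.Quotient.mk I r) =
      φK ∘ₗ Algebra.lsmul K K M r ∘ₗ φK.symm := by
    refine LinearMap.ext fun w => ?_
    exact ((map_smul φ r _).trans (congrArg (r • ·) (φ.apply_symm_apply w))).symm
  exact ⟨r, by rw [← hb, Algebra.norm_apply, hφ, LinearMap.det_conj]⟩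

variable [IsSemisimpleModule R M] [Nontrivial M] [StarRing (End R M)]

theorem exists_isStarNormal_det_eq (a : K) :
    ∃ b : End R M, IsStarNormal b ∧ LinearMap.det (b.restrictScalars K) = a := by
  obtain ⟨e, he, _⟩ := exists_isIdempotentElem_isSimpleModule_range R M
  obtain ⟨p, hp, hpn, _⟩ := exists_isStarNormal_isIdempotentElem he
  have := finite_submodule_of_isScalarTower (K := K) (LinearMap.range p)
  obtain ⟨r, hr⟩ := exists_det_lsmul_eq (R := R) (M := LinearMap.range p) a
  have hcenter : algebraMap R (End R M) (r - 1) ∈ Set.center (End R M) :=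
    Semigroup.mem_center_iff.2 fun g => (Algebra.commutes _ g).symm
  have hnormal : IsStarNormal ((r - 1) • p) := by
    rw [Algebra.smul_def]
    exact isStarNormal_mul_of_mem_center hcenter hpn
  exact ⟨1 + (r - 1) • p, inferInstance,
    (det_one_add_sub_one_smul_of_isIdempotentElem hp r).trans hr⟩

theorem exists_mem_unitary_mul_star_eq {a : K} (ha : a ≠ 0) :
    ∃ z ∈ unitary (End R M), ∃ b : End R M,
      z * star b = b ∧ LinearMap.det (b.restrictScalars K) = a := by
  obtain ⟨b, hb, hdet⟩ := exists_isStarNormal_det_eq (R := R) (M := M) a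
  have hunit : IsUnit b := (End.isUnit_iff b).2 <| (End.isUnit_iff (b.restrictScalars K)).1 <|
    (LinearMap.isUnit_iff_isUnit_det _).2 (hdet ▸ ha.isUnit)
  obtain ⟨u, rfl⟩ := hunit
  refine ⟨u * ↑(star u)⁻¹, (Units.mul_inv_mem_unitary _ _).2 ?_, u, ?_, hdet⟩
  · exact Units.ext (by simpa using hb.star_comm_self.eq)
  · rw [← Units.coe_star, Units.inv_mul_cancel_right]

end Determinant

section FormAdjoint

variable {K m : Type*} [CommRing K] [StarRing K] [Fintype m] [DecidableEq m] {B : Matrix m m K}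

/-- The adjoint of `X` for the sesquilinear form with Gram matrix `B`, in the convention in which
`X` is an isometry of the form when `X * B * Xᴴ = B`; meaningful for invertible `B`. -/
noncomputable def formAdjoint (B X : Matrix m m K) : Matrix m m K :=
  B * Xᴴ * B⁻¹

theorem formAdjoint_add (X Y : Matrix m m K) :
    formAdjoint B (X + Y) = formAdjoint B X + formAdjoint B Y := by
  simp only [formAdjoint, conjTranspose_add, mul_add, add_mul]

theorem formAdjoint_mul (hB : IsUnit B) (X Y : Matrix m m K) :
    formAdjoint B (X * Y) = formAdjoint B Y * formAdjoint B X := by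
  simp only [formAdjoint, conjTranspose_mul, mul_assoc,
    nonsing_inv_mul_cancel_left B _ ((isUnit_iff_isUnit_det B).1 hB)]

theorem formAdjoint_formAdjoint (hB : IsUnit B) (hBherm : B.IsHermitian) (X : Matrix m m K) :
    formAdjoint B (formAdjoint B X) = X := by
  have hdet := (isUnit_iff_isUnit_det B).1 hB
  simp only [formAdjoint, conjTranspose_mul, conjTranspose_conjTranspose, conjTranspose_nonsing_inv,
    hBherm.eq, mul_assoc, mul_nonsing_inv B hdet, mul_one, mul_nonsing_inv_cancel_left B _ hdet]

theorem det_formAdjoint (hB : IsUnit B) (X : Matrix m m K) :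
    (formAdjoint B X).det = star X.det := by
  rw [formAdjoint, det_conj hB, det_conjTranspose]

theorem mul_mul_conjTranspose_eq_iff (hB : IsUnit B) {X : Matrix m m K} :
    X * B * Xᴴ = B ↔ X * formAdjoint B X = 1 := by
  have hdet := (isUnit_iff_isUnit_det B).1 hB
  rw [formAdjoint, ← mul_assoc, ← mul_assoc]
  exact ⟨fun h => by rw [h, mul_nonsing_inv B hdet],
    fun h => by rw [← nonsing_inv_mul_cancel_right B (X * B * Xᴴ) hdet, h, one_mul]⟩

theorem commute_formAdjoint (hB : IsUnit B) {X Y : Matrix m m K} (hX : X * B * Xᴴ = B)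
    (h : Commute X Y) : Commute X (formAdjoint B Y) := by
  have hX' := (mul_mul_conjTranspose_eq_iff hB).1 hX
  have h' : formAdjoint B X * formAdjoint B Y = formAdjoint B Y * formAdjoint B X := by
    rw [← formAdjoint_mul hB, ← formAdjoint_mul hB, h.eq]
  calc X * formAdjoint B Y = X * (formAdjoint B Y * formAdjoint B X) * X := by
        rw [mul_assoc, mul_assoc, mul_eq_one_comm.1 hX', mul_one]
    _ = formAdjoint B Y * X := by
        rw [← h', ← mul_assoc, hX', one_mul]

theorem det_mul_star_det_eq_one (hB : IsUnit B) {X : Matrix m m K} (hX : X * B * Xᴴ = B) :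
    X.det * star X.det = 1 := by
  rw [← det_formAdjoint hB, ← det_mul, (mul_mul_conjTranspose_eq_iff hB).1 hX, det_one]

end FormAdjoint

section Commutant

variable {K m : Type*} [CommRing K] [Fintype m] [DecidableEq m] {x : Matrix m m K}

/-- The commutant of `x`, realised as the endomorphism ring of the `K[X]`-module `x` defines on
`m → K`, so that the theory of semisimple modules applies to it. -/
abbrev Commutant (x : Matrix m m K) : Type _ :=
  End K[X] (AEval' (toLin' x))

/-- The matrix of an element of the commutant in the standard basis. -/
noncomputable def Commutant.toMatrix (x : Matrix m m K) : Commutant x →+* Matrix m m K :=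
  ((AEval'.of (toLin' x)).symm.conjRingEquiv.trans
    (LinearMap.toMatrixAlgEquiv' (R := K) (n := m)).toRingEquiv).toRingHom.comp
    { toFun g := g.restrictScalars K
      map_one' := rfl
      map_mul' _ _ := rfl
      map_zero' := rfl
      map_add' _ _ := rfl }

theorem Commutant.toMatrix_injective : Function.Injective (Commutant.toMatrix x) :=
  fun _ _ h => LinearMap.restrictScalars_injective K <|
    (AEval'.of (toLin' x)).symm.conjRingEquiv.injective <|
      LinearMap.toMatrixAlgEquiv'.injective h

theorem Commutant.det_toMatrix (g : Commutant x) :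
    (Commutant.toMatrix x g).det = LinearMap.det (g.restrictScalars K) :=
  (LinearMap.det_toMatrix' _).trans
    (LinearMap.det_conj (g.restrictScalars K) (AEval'.of (toLin' x)).symm)

theorem Commutant.toMatrix_algebraMap_X :
    Commutant.toMatrix x (algebraMap K[X] (Commutant x) X) = x := by
  refine .trans (congrArg LinearMap.toMatrix' (LinearMap.ext fun v => ?_))
    (LinearMap.toMatrix'_toLin' x)
  exact AEval'.of_symm_X_smul (toLin' x) (AEval'.of (toLin' x) v)

theorem Commutant.commute_toMatrix (g : Commutant x) : Commute x (Commutant.toMatrix x g) := by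
  have h : Commute (algebraMap K[X] (Commutant x) X) g := Algebra.commutes X g
  simpa only [Commutant.toMatrix_algebraMap_X] using h.map (Commutant.toMatrix x)

/-- A matrix commuting with `x`, viewed as an element of the commutant. -/
noncomputable def Commutant.ofCommute {Y : Matrix m m K} (h : Commute x Y) : Commutant x :=
  LinearMap.ofAEval _ ((AEval'.of (toLin' x)).toLinearMap ∘ₗ toLin' Y) fun v => by
    have hv : toLin' Y (toLin' x v) = toLin' x (toLin' Y v) := by
      rw [← toLin'_mul_apply, ← h.eq, toLin'_mul_apply]
    exact (congrArg _ hv).trans (AEval'.X_smul_of (toLin' x) (toLin' Y v)).symm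

theorem Commutant.toMatrix_ofCommute {Y : Matrix m m K} (h : Commute x Y) :
    Commutant.toMatrix x (Commutant.ofCommute h) = Y :=
  LinearMap.toMatrix'_toLin' Y

/-- The involution that `formAdjoint B` induces on the commutant of an isometry `x`; not an
instance, since it depends on `B`. -/
noncomputable abbrev Commutant.starRing [StarRing K] {B : Matrix m m K} (hB : IsUnit B)
    (hBherm : B.IsHermitian) (hx : x * B * xᴴ = B) : StarRing (Commutant x) where
  star g := Commutant.ofCommute (commute_formAdjoint hB hx g.commute_toMatrix)
  star_involutive g := Commutant.toMatrix_injective <| by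
    simp only [Commutant.toMatrix_ofCommute, formAdjoint_formAdjoint hB hBherm]
  star_mul g h := Commutant.toMatrix_injective <| by
    simp only [Commutant.toMatrix_ofCommute, map_mul, formAdjoint_mul hB]
  star_add g h := Commutant.toMatrix_injective <| by
    simp only [Commutant.toMatrix_ofCommute, map_add, formAdjoint_add]

end Commutant

section FiniteField

variable {K m : Type*} [Field K] [Fintype m] [DecidableEq m] {x : Matrix m m K}

theorem isSemisimpleModule_of_squarefree_minpoly (hss : Squarefree (minpoly K x)) :
    IsSemisimpleModule K[X] (AEval' (toLin' x)) :=
  End.isSemisimple_of_squarefree_aeval_eq_zero ((minpoly_toLin' x).symm ▸ hss) (minpoly.aeval _ _)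

theorem exists_commute_det_eq_div_star [Finite K] [StarRing K] [Nonempty m] {B : Matrix m m K}
    (hB : IsUnit B) (hBherm : B.IsHermitian) (hx : x * B * xᴴ = B)
    (hss : Squarefree (minpoly K x)) {a : K} (ha : a ≠ 0) :
    ∃ z : Matrix m m K, z * B * zᴴ = B ∧ Commute x z ∧ z.det = a / star a := by
  let _ := Commutant.starRing hB hBherm hx
  have _ := isSemisimpleModule_of_squarefree_minpoly hss
  have : Nontrivial (AEval' (toLin' x)) := inferInstanceAs (Nontrivial (m → K))
  have hstar (g : Commutant x) :
      Commutant.toMatrix x (star g) = formAdjoint B (Commutant.toMatrix x g) :=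
    Commutant.toMatrix_ofCommute _
  obtain ⟨z, hz, b, hzb, hb⟩ :=
    exists_mem_unitary_mul_star_eq (R := K[X]) (M := AEval' (toLin' x)) ha
  refine ⟨Commutant.toMatrix x z, ?_, Commutant.commute_toMatrix z, ?_⟩
  · rw [mul_mul_conjTranspose_eq_iff hB, ← hstar, ← map_mul, Unitary.mul_star_self_of_mem hz,
      map_one]
  · rw [eq_div_iff (star_ne_zero.2 ha), ← hb, ← Commutant.det_toMatrix, ← det_formAdjoint hB,
      ← hstar, ← det_mul, ← map_mul, hzb]

end FiniteField

theorem exists_div_star_eq {K : Type*} [Field K] [StarRing K] (hK : ∃ c : K, star c ≠ c) {δ : K}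
    (hδ : δ * star δ = 1) : ∃ a : K, a ≠ 0 ∧ a / star a = δ := by
  have hstar (c : K) : δ * star (c + δ * star c) = c + δ * star c := by
    rw [star_add, star_mul', star_star, mul_add, ← mul_assoc, hδ, one_mul, add_comm]
  obtain ⟨c, hc⟩ : ∃ c : K, c + δ * star c ≠ 0 := by
    by_contra! h
    have hδ' : δ = -1 := by linear_combination (h 1) - δ * star_one K
    obtain ⟨c, hc⟩ := hK
    exact hc (by linear_combination -h c + star c * hδ')
  exact ⟨c + δ * star c, hc, by rw [div_eq_iff (star_ne_zero.2 hc), hstar]⟩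

theorem semisimple_special_unitary_class_eq_unitary_class_general {K m : Type*} [Field K] [Finite K]
    [StarRing K] (hK : ∃ c : K, star c ≠ c) [Fintype m] [DecidableEq m] {B : Matrix m m K}
    (hB : IsUnit B) (hBherm : B.IsHermitian) {x g : Matrix m m K} (hxB : x * B * xᴴ = B)
    (hss : Squarefree (minpoly K x)) (hgB : g * B * gᴴ = B) :
    ∃ h : Matrix m m K, IsUnit h ∧ h * B * hᴴ = B ∧ h.det = 1 ∧ g⁻¹ * x * g = h⁻¹ * x * h := by
  have hg := det_mul_star_det_eq_one hB hgB
  have hg0 : g.det ≠ 0 := left_ne_zero_of_mul_eq_one hg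
  obtain hm | hm := isEmpty_or_nonempty m
  · exact ⟨g, (isUnit_iff_isUnit_det g).2 hg0.isUnit, hgB, det_isEmpty, rfl⟩
  obtain ⟨a, ha, had⟩ := exists_div_star_eq (δ := g.det⁻¹) hK
    (by rw [star_inv₀, ← mul_inv, hg, inv_one])
  obtain ⟨z, hzB, hxz, hz⟩ := exists_commute_det_eq_div_star hB hBherm hxB hss ha
  have hdet : (z * g).det = 1 := by rw [det_mul, hz, had, inv_mul_cancel₀ hg0]
  have hzunit : IsUnit z.det := IsUnit.of_mul_eq_one _ (det_mul_star_det_eq_one hB hzB)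
  refine ⟨z * g, (isUnit_iff_isUnit_det _).2 (hdet ▸ isUnit_one), ?_, hdet, ?_⟩
  · calc z * g * B * (z * g)ᴴ = z * (g * B * gᴴ) * zᴴ := by
          simp only [conjTranspose_mul, mul_assoc]
      _ = B := by rw [hgB, hzB]
  · calc g⁻¹ * x * g = g⁻¹ * (z⁻¹ * (z * x)) * g := by
          rw [nonsing_inv_mul_cancel_left z x hzunit]
      _ = (z * g)⁻¹ * x * (z * g) := by
          rw [← hxz.eq, Matrix.mul_inv_rev]; simp only [mul_assoc]

section Frobenius

variable {K : Type*} [Field K] [Fintype K]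

theorem exists_pow_ne_self {q : ℕ} (hcard : Fintype.card K = q ^ 2) : ∃ c : K, c ^ q ≠ c := by
  have hq : 1 < q := by
    by_contra!
    have := Fintype.one_lt_card (α := K)
    interval_cases q <;> omega
  by_contra! h
  have hdvd : Fintype.card K - 1 ∣ q - 1 := (FiniteField.forall_pow_eq_one_iff K _).1 fun u =>
    Units.ext <| by
      rw [Units.val_pow_eq_pow_val, Units.val_one]
      exact mul_right_cancel₀ u.ne_zero (by rw [← pow_succ, Nat.sub_add_cancel hq.le, h, one_mul])
  have hle := Nat.le_of_dvd (by omega) hdvd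
  rw [hcard] at hle
  have : q < q ^ 2 := by nlinarith
  omega

/-- The involution `a ↦ a ^ (p ^ k)` of a field with `(p ^ k) ^ 2` elements; `hermStar (p ^ k)` is
then definitionally the conjugate transpose. -/
abbrev frobeniusStarRing {p k : ℕ} [Fact p.Prime] (hcard : Fintype.card K = (p ^ k) ^ 2) :
    StarRing K where
  star a := a ^ p ^ k
  star_involutive a := by
    change (a ^ p ^ k) ^ p ^ k = a
    rw [← pow_mul, ← sq, ← hcard, FiniteField.pow_card]
  star_mul a b := by
    change (a * b) ^ p ^ k = b ^ p ^ k * a ^ p ^ k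
    rw [mul_pow, mul_comm]
  star_add a b :=
    have : CharP K p := charP_of_card_eq_prime_pow (f := k * 2) (by rw [hcard, pow_mul])
    add_pow_char_pow a b p k

end Frobenius

/-- Semisimple determinant-one elements of a unitary group which are conjugate in the
unitary group are already conjugate by a determinant-one unitary element; so semisimple
conjugacy classes of the special unitary group coincide with unitary classes. -/
theorem semisimple_special_unitary_class_eq_unitary_class
    {p k : ℕ} [Fact p.Prime] (hk : k ≠ 0) (q : ℕ) (hq : q = p ^ k)
    {K : Type*} [Field K] [Fintype K] (hcard : Fintype.card K = q ^ 2)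
    {n : ℕ} (B : Matrix (Fin n) (Fin n) K) (hB : IsUnit B)
    (hBherm : hermStar q B = B)
    (x y : Matrix (Fin n) (Fin n) K)
    (hx : IsUnit x) (hy : IsUnit y)
    (hxB : x * B * hermStar q x = B) (hyB : y * B * hermStar q y = B)
    (hssx : Squarefree (minpoly K x)) (hssy : Squarefree (minpoly K y))
    (hdetx : x.det = 1) (hdety : y.det = 1)
    (hconj : ∃ g : Matrix (Fin n) (Fin n) K, IsUnit g ∧ g * B * hermStar q g = B ∧
        y = g⁻¹ * x * g) :
    ∃ h : Matrix (Fin n) (Fin n) K, IsUnit h ∧ h * B * hermStar q h = B ∧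
      h.det = 1 ∧ y = h⁻¹ * x * h := by
  subst hq
  obtain ⟨g, -, hgB, rfl⟩ := hconj
  let _ := frobeniusStarRing hcard
  exact semisimple_special_unitary_class_eq_unitary_class_general (exists_pow_ne_self hcard) hB
    hBherm hxB hssx hgB
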